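/- Every causal net is safe: for a causal net C = (B, L, E, m0), every marking reachable from the initial marking m0 by a firing sequence is a set, i.e., assigns at most one token to each condition. -/

import Mathlib

/-- A transition of a P/T net: a triple (pre-set, label, post-set). -/
structure PNTrans (S A : Type) where
  pre : Multiset S
  label : A
  post : Multiset S
deriving DecidableEq

/-- A P/T Petri net over places `S` and labels `A`: a finite set of transitions,
each with a nonempty pre-set. -/
structure PetriNet (S A : Type) [DecidableEq S] [DecidableEq A] where
  T : Finset (PNTrans S A)
  pre_ne : ∀ t ∈ T, t.pre ≠ 0

/-- The additive closure `R⊕` of a place relation `R`: the least relation on markings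
containing `(θ, θ)` and closed under adding `R`-related places on both sides. -/
inductive AddClosure {S : Type} (R : S → S → Prop) : Multiset S → Multiset S → Prop
  | zero : AddClosure R 0 0
  | cons {s1 s2 : S} {m1 m2 : Multiset S} :
      R s1 s2 → AddClosure R m1 m2 → AddClosure R (s1 ::ₘ m1) (s2 ::ₘ m2)

/-- `Fires N m t m'` : transition `t` of `N` is enabled at marking `m` and its firing
produces `m' = (m ⊖ pre(t)) ⊕ post(t)`. -/
def Fires {S A : Type} [DecidableEq S] [DecidableEq A]
    (N : PetriNet S A) (m : Multiset S) (t : PNTrans S A) (m' : Multiset S) : Prop :=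
  t ∈ N.T ∧ t.pre ≤ m ∧ m' = m - t.pre + t.post

/-- A place bisimulation on `N`. -/
def IsPlaceBisim {S A : Type} [DecidableEq S] [DecidableEq A]
    (N : PetriNet S A) (R : S → S → Prop) : Prop :=
  ∀ m1 m2, AddClosure R m1 m2 →
    (∀ t1 m1', Fires N m1 t1 m1' →
      ∃ t2 m2', Fires N m2 t2 m2' ∧ AddClosure R t1.pre t2.pre ∧
        t1.label = t2.label ∧ AddClosure R t1.post t2.post ∧ AddClosure R m1' m2') ∧
    (∀ t2 m2', Fires N m2 t2 m2' →
      ∃ t1 m1', Fires N m1 t1 m1' ∧ AddClosure R t1.pre t2.pre ∧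
        t1.label = t2.label ∧ AddClosure R t1.post t2.post ∧ AddClosure R m1' m2')

/-- Place bisimilarity `m1 ~p m2`. -/
def PlaceBisimilar {S A : Type} [DecidableEq S] [DecidableEq A]
    (N : PetriNet S A) (m1 m2 : Multiset S) : Prop :=
  ∃ R : S → S → Prop, IsPlaceBisim N R ∧ AddClosure R m1 m2

/-- An interleaving bisimulation on the markings of `N`. -/
def IsIntBisim {S A : Type} [DecidableEq S] [DecidableEq A]
    (N : PetriNet S A) (Q : Multiset S → Multiset S → Prop) : Prop :=
  ∀ m1 m2, Q m1 m2 →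
    (∀ t1 m1', Fires N m1 t1 m1' →
      ∃ t2 m2', Fires N m2 t2 m2' ∧ t1.label = t2.label ∧ Q m1' m2') ∧
    (∀ t2 m2', Fires N m2 t2 m2' →
      ∃ t1 m1', Fires N m1 t1 m1' ∧ t1.label = t2.label ∧ Q m1' m2')

/-- Interleaving bisimilarity `m1 ~int m2`. -/
def IntBisimilar {S A : Type} [DecidableEq S] [DecidableEq A]
    (N : PetriNet S A) (m1 m2 : Multiset S) : Prop :=
  ∃ Q, IsIntBisim N Q ∧ Q m1 m2

/-- First projection of a linking. -/
def lproj1 {S : Type} (l : Multiset (S × S)) : Multiset S := l.map Prod.fst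

/-- Second projection of a linking. -/
def lproj2 {S : Type} (l : Multiset (S × S)) : Multiset S := l.map Prod.snd

/-- A structure-preserving bisimulation on `N`: a set of linkings. -/
def IsSpBisim {S A : Type} [DecidableEq S] [DecidableEq A]
    (N : PetriNet S A) (R : Set (Multiset (S × S))) : Prop :=
  ∀ l ∈ R, ∀ c ≤ l,
    (∀ t1 ∈ N.T, t1.pre = lproj1 c →
      ∃ t2 ∈ N.T, t1.label = t2.label ∧ t2.pre = lproj2 c ∧
        ∃ cb : Multiset (S × S), t1.post = lproj1 cb ∧ t2.post = lproj2 cb ∧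
          l - c + cb ∈ R) ∧
    (∀ t2 ∈ N.T, t2.pre = lproj2 c →
      ∃ t1 ∈ N.T, t1.label = t2.label ∧ t1.pre = lproj1 c ∧
        ∃ cb : Multiset (S × S), t1.post = lproj1 cb ∧ t2.post = lproj2 cb ∧
          l - c + cb ∈ R)

/-- Structure-preserving bisimilarity `m1 ~sp m2`. -/
def SpBisimilar {S A : Type} [DecidableEq S] [DecidableEq A]
    (N : PetriNet S A) (m1 m2 : Multiset S) : Prop :=
  ∃ (R : Set (Multiset (S × S))) (l : Multiset (S × S)),
    IsSpBisim N R ∧ l ∈ R ∧ lproj1 l = m1 ∧ lproj2 l = m2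

/-- The flow relation of a net with events `events`, over the disjoint union of
conditions and events. -/
def flowR {B L : Type} (events : Finset (PNTrans B L)) :
    (B ⊕ PNTrans B L) → (B ⊕ PNTrans B L) → Prop
  | Sum.inl b, Sum.inr e => e ∈ events ∧ b ∈ e.pre
  | Sum.inr e, Sum.inl b => e ∈ events ∧ b ∈ e.post
  | _, _ => False

/-- A causal net: a finite, acyclic marked net whose conditions are unbranched and
whose arcs all have weight 1; its initial marking is the set of conditions with empty
pre-set. -/
structure CausalNet (B L : Type) [DecidableEq B] where
  conds : Finset B
  events : Finset (PNTrans B L)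
  pre_mem : ∀ e ∈ events, ∀ b ∈ e.pre, b ∈ conds
  post_mem : ∀ e ∈ events, ∀ b ∈ e.post, b ∈ conds
  pre_ne : ∀ e ∈ events, e.pre ≠ 0
  acyclic : ∀ x, ¬ Relation.TransGen (flowR events) x x
  unbranched_in : ∀ b ∈ conds, (events.filter fun e => b ∈ e.post).card ≤ 1
  unbranched_out : ∀ b ∈ conds, (events.filter fun e => b ∈ e.pre).card ≤ 1
  weight_pre : ∀ e ∈ events, ∀ b : B, e.pre.count b ≤ 1
  weight_post : ∀ e ∈ events, ∀ b : B, e.post.count b ≤ 1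

/-- `Min(C)`: the conditions with empty pre-set (this set is also the initial marking). -/
def CausalNet.minSet {B L : Type} [DecidableEq B] (C : CausalNet B L) : Finset B :=
  C.conds.filter fun b => ∀ e ∈ C.events, b ∉ e.post

/-- `Max(C)`: the conditions with empty post-set. -/
def CausalNet.maxSet {B L : Type} [DecidableEq B] (C : CausalNet B L) : Finset B :=
  C.conds.filter fun b => ∀ e ∈ C.events, b ∉ e.pre

/-- `IsFolding N m0 C ρ` : `ρ` is a folding from the causal net `C` into the marked net
`N(m0)`; it is type- and label-preserving, maps the initial marking of `C` onto `m0`, and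
commutes with pre-sets and post-sets of events (so each event is mapped to the transition
of `N` with the same label and the projected pre- and post-sets).  `(C, ρ)` is then a
process of `N(m0)`. -/
def IsFolding {S A B : Type} [DecidableEq S] [DecidableEq A] [DecidableEq B]
    (N : PetriNet S A) (m0 : Multiset S) (C : CausalNet B A) (ρ : B → S) : Prop :=
  C.minSet.val.map ρ = m0 ∧
  ∀ e ∈ C.events,
    ({ pre := e.pre.map ρ, label := e.label, post := e.post.map ρ } : PNTrans S A) ∈ N.T

/-- `C1 [e⟩ C2` : the causal net `C1` moves in one step to `C2` through the event `e`. -/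
def CNMove {B L : Type} [DecidableEq B] [DecidableEq L]
    (C1 : CausalNet B L) (e : PNTrans B L) (C2 : CausalNet B L) : Prop :=
  (∀ b ∈ e.pre, b ∈ C1.maxSet) ∧
  C2.events = insert e C1.events ∧
  C2.conds = C1.conds ∪ e.post.toFinset

/-- `(C1, ρ1) →e (C2, ρ2)` : the process `(C1, ρ1)` of `N(m0)` moves in one step to the
process `(C2, ρ2)` of `N(m0)` through the event `e`, with `ρ1 ⊆ ρ2`. -/
def ProcMove {S A B : Type} [DecidableEq S] [DecidableEq A] [DecidableEq B]
    (N : PetriNet S A) (C1 : CausalNet B A) (ρ1 : B → S) (e : PNTrans B A)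
    (C2 : CausalNet B A) (ρ2 : B → S) : Prop :=
  (∃ m0 : Multiset S, IsFolding N m0 C1 ρ1 ∧ IsFolding N m0 C2 ρ2) ∧
  CNMove C1 e C2 ∧
  ∀ b ∈ C1.conds, ρ1 b = ρ2 b

/-- A causal-net bisimulation on `N`: a relation of triples `(ρ1, C, ρ2)` made of
processes, in which forward moves of either side can be matched by the other. -/
def IsCNBisim {S A B : Type} [DecidableEq S] [DecidableEq A] [DecidableEq B]
    (N : PetriNet S A) (R : (B → S) → CausalNet B A → (B → S) → Prop) : Prop :=
  ∀ ρ1 C ρ2, R ρ1 C ρ2 →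
    (∃ m01, IsFolding N m01 C ρ1) ∧ (∃ m02, IsFolding N m02 C ρ2) ∧
    (∀ e C' ρ1', ProcMove N C ρ1 e C' ρ1' →
      ∃ ρ2', ProcMove N C ρ2 e C' ρ2' ∧ R ρ1' C' ρ2') ∧
    (∀ e C' ρ2', ProcMove N C ρ2 e C' ρ2' →
      ∃ ρ1', ProcMove N C ρ1 e C' ρ1' ∧ R ρ1' C' ρ2')

/-- A hereditary causal-net bisimulation: a causal-net bisimulation that also matches
backward moves (undoing of events). -/
def IsHCNBisim {S A B : Type} [DecidableEq S] [DecidableEq A] [DecidableEq B]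
    (N : PetriNet S A) (R : (B → S) → CausalNet B A → (B → S) → Prop) : Prop :=
  IsCNBisim N R ∧
  ∀ ρ1 C ρ2, R ρ1 C ρ2 →
    (∀ e C' ρ1', ProcMove N C' ρ1' e C ρ1 →
      ∃ ρ2', ProcMove N C' ρ2' e C ρ2 ∧ R ρ1' C' ρ2') ∧
    (∀ e C' ρ2', ProcMove N C' ρ2' e C ρ2 →
      ∃ ρ1', ProcMove N C' ρ1' e C ρ1 ∧ R ρ1' C' ρ2')

/-- Causal-net bisimilarity `m1 ~cn m2`: a causal-net bisimulation contains a triple over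
an event-less causal net `C⁰` with `ρi(Min(C⁰)) = ρi(Max(C⁰)) = mi`. -/
def CNBisimilar {S A : Type} [DecidableEq S] [DecidableEq A]
    (N : PetriNet S A) (m1 m2 : Multiset S) : Prop :=
  ∃ R : (ℕ → S) → CausalNet ℕ A → (ℕ → S) → Prop, IsCNBisim N R ∧
    ∃ (ρ1 : ℕ → S) (C : CausalNet ℕ A) (ρ2 : ℕ → S), R ρ1 C ρ2 ∧
      C.events = ∅ ∧
      C.minSet.val.map ρ1 = m1 ∧ C.maxSet.val.map ρ1 = m1 ∧
      C.minSet.val.map ρ2 = m2 ∧ C.maxSet.val.map ρ2 = m2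

/-- Hereditary causal-net bisimilarity `m1 ~hcn m2`. -/
def HCNBisimilar {S A : Type} [DecidableEq S] [DecidableEq A]
    (N : PetriNet S A) (m1 m2 : Multiset S) : Prop :=
  ∃ R : (ℕ → S) → CausalNet ℕ A → (ℕ → S) → Prop, IsHCNBisim N R ∧
    ∃ (ρ1 : ℕ → S) (C : CausalNet ℕ A) (ρ2 : ℕ → S), R ρ1 C ρ2 ∧
      C.events = ∅ ∧
      C.minSet.val.map ρ1 = m1 ∧ C.maxSet.val.map ρ1 = m1 ∧
      C.minSet.val.map ρ2 = m2 ∧ C.maxSet.val.map ρ2 = m2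

/-- The causal partial order on the events of a causal net: `e1 ⪯ e2` iff there is a
path in the net from `e1` to `e2`. -/
def causalLeq {B L : Type} [DecidableEq B] (C : CausalNet B L)
    (e1 e2 : PNTrans B L) : Prop :=
  Relation.ReflTransGen (flowR C.events) (Sum.inr e1) (Sum.inr e2)

/-- `g` is an event isomorphism between the causal nets `C1` and `C2`: a label-preserving,
order-preserving bijection between their events (represented as its graph). -/
def IsEventIso {B L : Type} [DecidableEq B] (C1 C2 : CausalNet B L)
    (g : Set (PNTrans B L × PNTrans B L)) : Prop :=
  (∀ p ∈ g, p.1 ∈ C1.events ∧ p.2 ∈ C2.events) ∧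
  (∀ e1 ∈ C1.events, ∃! e2 : PNTrans B L, (e1, e2) ∈ g) ∧
  (∀ e2 ∈ C2.events, ∃! e1 : PNTrans B L, (e1, e2) ∈ g) ∧
  (∀ p ∈ g, PNTrans.label (Prod.fst p) = PNTrans.label (Prod.snd p)) ∧
  (∀ p ∈ g, ∀ q ∈ g, (causalLeq C1 p.1 q.1 ↔ causalLeq C2 p.2 q.2))

/-- A fully concurrent bisimulation on `N`: a relation of triples `(π1, g, π2)` where
`πi = (Ci, ρi)` are processes and `g` is an event isomorphism between `C1` and `C2`. -/
def IsFCBisim {S A B : Type} [DecidableEq S] [DecidableEq A] [DecidableEq B]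
    (N : PetriNet S A)
    (R : CausalNet B A → (B → S) → Set (PNTrans B A × PNTrans B A) →
         CausalNet B A → (B → S) → Prop) : Prop :=
  ∀ C1 ρ1 g C2 ρ2, R C1 ρ1 g C2 ρ2 →
    (∃ m01, IsFolding N m01 C1 ρ1) ∧ (∃ m02, IsFolding N m02 C2 ρ2) ∧
    IsEventIso C1 C2 g ∧
    (∀ e1 C1' ρ1', ProcMove N C1 ρ1 e1 C1' ρ1' →
      ∃ e2 C2' ρ2', ProcMove N C2 ρ2 e2 C2' ρ2' ∧
        R C1' ρ1' (g ∪ {(e1, e2)}) C2' ρ2') ∧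
    (∀ e2 C2' ρ2', ProcMove N C2 ρ2 e2 C2' ρ2' →
      ∃ e1 C1' ρ1', ProcMove N C1 ρ1 e1 C1' ρ1' ∧
        R C1' ρ1' (g ∪ {(e1, e2)}) C2' ρ2')

/-- A hereditary fully concurrent bisimulation: a fully concurrent bisimulation that also
matches backward moves, removing the corresponding pair from the event isomorphism. -/
def IsHFCBisim {S A B : Type} [DecidableEq S] [DecidableEq A] [DecidableEq B]
    (N : PetriNet S A)
    (R : CausalNet B A → (B → S) → Set (PNTrans B A × PNTrans B A) →
         CausalNet B A → (B → S) → Prop) : Prop :=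
  IsFCBisim N R ∧
  ∀ C1 ρ1 g C2 ρ2, R C1 ρ1 g C2 ρ2 →
    (∀ e1 C1' ρ1', ProcMove N C1' ρ1' e1 C1 ρ1 →
      ∃ e2 C2' ρ2', ProcMove N C2' ρ2' e2 C2 ρ2 ∧
        R C1' ρ1' (g \ {(e1, e2)}) C2' ρ2') ∧
    (∀ e2 C2' ρ2', ProcMove N C2' ρ2' e2 C2 ρ2 →
      ∃ e1 C1' ρ1', ProcMove N C1' ρ1' e1 C1 ρ1 ∧
        R C1' ρ1' (g \ {(e1, e2)}) C2' ρ2')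

/-- Hereditary fully concurrent bisimilarity `m1 ~hfc m2`. -/
def HFCBisimilar {S A : Type} [DecidableEq S] [DecidableEq A]
    (N : PetriNet S A) (m1 m2 : Multiset S) : Prop :=
  ∃ R : CausalNet ℕ A → (ℕ → S) → Set (PNTrans ℕ A × PNTrans ℕ A) →
        CausalNet ℕ A → (ℕ → S) → Prop,
    IsHFCBisim N R ∧
    ∃ (C1 : CausalNet ℕ A) (ρ1 : ℕ → S) (C2 : CausalNet ℕ A) (ρ2 : ℕ → S),
      R C1 ρ1 ∅ C2 ρ2 ∧ C1.events = ∅ ∧ C2.events = ∅ ∧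
      C1.minSet.val.map ρ1 = m1 ∧ C1.maxSet.val.map ρ1 = m1 ∧
      C2.minSet.val.map ρ2 = m2 ∧ C2.maxSet.val.map ρ2 = m2

/-- One firing step in a causal net, seen as a P/T net whose transitions are its events. -/
def cnStep {B L : Type} [DecidableEq B] (C : CausalNet B L)
    (m m' : Multiset B) : Prop :=
  ∃ e ∈ C.events, e.pre ≤ m ∧ m' = m - e.pre + e.post

open Classical in
theorem cn_counting {B L : Type} [DecidableEq B] (C : CausalNet B L)
    (m : Multiset B) (h : Relation.ReflTransGen (cnStep C) C.minSet.val m) :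
    ∃ f : PNTrans B L → ℕ, ∀ b : B,
      m.count b + ∑ e ∈ C.events, f e * e.pre.count b
        = C.minSet.val.count b + ∑ e ∈ C.events, f e * e.post.count b := by
  induction h with
  | refl => exact ⟨fun _ => 0, fun b => by simp⟩
  | tail _ hstep ih =>
    obtain ⟨f, hf⟩ := ih
    obtain ⟨e, he, hle, rfl⟩ := hstep
    refine ⟨fun x => f x + if x = e then 1 else 0, fun b => ?_⟩
    have h1 := hf b
    have h2 := Multiset.count_le_of_le b hle
    simp only [add_mul, Finset.sum_add_distrib, ite_mul, one_mul, zero_mul,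
      Finset.sum_ite_eq', he, if_true, Multiset.count_add, Multiset.count_sub]
    omega

/-- The tokens ever put on a condition are at most one, if its producers fire at most once. -/
theorem cn_bound {B L : Type} [DecidableEq B] (C : CausalNet B L)
    (f : PNTrans B L → ℕ) (b : B)
    (hf : ∀ e ∈ C.events, b ∈ e.post → f e ≤ 1) :
    C.minSet.val.count b + ∑ e ∈ C.events, f e * e.post.count b ≤ 1 := by
  by_cases hex : ∃ e ∈ C.events, b ∈ e.post
  · obtain ⟨e, he, hb⟩ := hex
    have h0 : C.minSet.val.count b = 0 := by
      rw [Multiset.count_eq_zero]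
      intro hmem
      exact (Finset.mem_filter.mp hmem).2 e he hb
    have hsum : ∑ x ∈ C.events, f x * x.post.count b = f e * e.post.count b := by
      apply Finset.sum_eq_single_of_mem e he
      intro x hx hne
      by_cases hbx : b ∈ x.post
      · exact absurd (Finset.card_le_one.mp (C.unbranched_in b (C.post_mem e he b hb)) x
          (Finset.mem_filter.mpr ⟨hx, hbx⟩) e (Finset.mem_filter.mpr ⟨he, hb⟩)) hne
      · simp [Multiset.count_eq_zero.mpr hbx]
    rw [h0, hsum, zero_add]
    exact Nat.mul_le_mul (hf e he hb) (C.weight_post e he b)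
  · have hsum : ∑ x ∈ C.events, f x * x.post.count b = 0 := by
      apply Finset.sum_eq_zero
      intro x hx
      have : b ∉ x.post := fun hb => hex ⟨x, hx, hb⟩
      simp [Multiset.count_eq_zero.mpr this]
    rw [hsum, add_zero]
    exact Multiset.nodup_iff_count_le_one.mp C.minSet.nodup b

/-- every causal net is safe: every marking reachable from the initial
marking assigns at most one token to each condition. -/
theorem causalNet_safe {B L : Type} [DecidableEq B] (C : CausalNet B L)
    (m : Multiset B) (h : Relation.ReflTransGen (cnStep C) C.minSet.val m) :
    ∀ b : B, m.count b ≤ 1 := by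
  obtain ⟨f, hf⟩ := cn_counting C m h
  let r : C.events → C.events → Prop := fun x y =>
    Relation.TransGen (flowR C.events) (Sum.inr x.1) (Sum.inr y.1)
  have : IsTrans C.events r := ⟨fun _ _ _ h1 h2 => h1.trans h2⟩
  have : Std.Irrefl r := ⟨fun x => C.acyclic _⟩
  have hwf : WellFounded r := Finite.wellFounded_of_trans_of_irrefl r
  have key : ∀ x : C.events, f x.1 ≤ 1 := by
    intro x
    induction x using hwf.induction with
    | _ x ih =>
      obtain ⟨e, he⟩ := x
      obtain ⟨b, hb⟩ := Multiset.exists_mem_of_ne_zero (C.pre_ne e he)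
      have h1 := cn_bound C f b (fun e' he' hb' => ih ⟨e', he'⟩
        (Relation.TransGen.tail (Relation.TransGen.single
          (show flowR C.events (Sum.inr e') (Sum.inl b) from ⟨he', hb'⟩))
          (show flowR C.events (Sum.inl b) (Sum.inr e) from ⟨he, hb⟩)))
      have h2 : f e * e.pre.count b ≤ ∑ x ∈ C.events, f x * x.pre.count b :=
        Finset.single_le_sum (f := fun x => f x * x.pre.count b)
          (fun _ _ => Nat.zero_le _) he
      have h3 : f e ≤ f e * e.pre.count b :=
        Nat.le_mul_of_pos_right _ (Multiset.count_pos.mpr hb)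
      have h4 := hf b
      show f e ≤ 1
      omega
  intro b
  have h1 := cn_bound C f b (fun e he _ => key ⟨e, he⟩)
  have h2 := hf b
  omega
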